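/- arXiv:2506.03715 — 2 statements merged into one kernel-verified Lean document; each statement's English description precedes it below -/
import Mathlib

section
/- Let α ∈ (0,1) and q ∈ [1,∞] with αq > n. Then there exists a constant c > 0 depending only on α, q, n such that for every R > 0 and every u ∈ W^{α,q}(B(0,R)) whose continuous representative vanishes on the boundary sphere ∂B(0,R), one has ‖u‖_{L¹(B(0,R))} ≤ c · R^{n(1−1/q)+α} · [u]_{W^{α,q}(B(0,R))}. -/
noncomputable section
open MeasureTheory Set Module Filter Metric
open scoped ENNReal NNReal Topology

/-- `ℝⁿ` with the Euclidean norm. -/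
abbrev Euc (n : ℕ) : Type := EuclideanSpace ℝ (Fin n)

/-- Fractional Sobolev (Slobodeckij) double-integral quantity
`[u]_{W^{s,p}}^p = ∫∫ ‖u x − u y‖^p / dist(x,y)^{sp+d} dμ dμ`. -/
def fracPow {X : Type*} [PseudoEMetricSpace X] [MeasurableSpace X]
    {F : Type*} [NormedAddCommGroup F]
    (d s p : ℝ) (μ : Measure X) (u : X → F) : ℝ≥0∞ :=
  ∫⁻ x, ∫⁻ y, ENNReal.ofReal (‖u x - u y‖ ^ p) / edist x y ^ (s * p + d) ∂μ ∂μ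

/-- Extended `α`-Hölder seminorm of `u` on `A`. -/
def eHolder {X : Type*} [PseudoEMetricSpace X] {F : Type*} [NormedAddCommGroup F]
    (α : ℝ) (A : Set X) (u : X → F) : ℝ≥0∞ :=
  ⨆ (x ∈ A) (y ∈ A), edist (u x) (u y) / edist x y ^ α

/-- The `W^{α,q}` seminorm `[u]_{W^{α,q}(A)}` (Hölder seminorm when `q = ∞`). -/
def eFracSeminorm {n : ℕ} (d α : ℝ) (q : ℝ≥0∞) (A : Set (Euc n)) (u : Euc n → ℝ) : ℝ≥0∞ :=
  if q = ∞ then eHolder α A u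
  else (fracPow d α q.toReal (volume.restrict A) u) ^ (1 / q.toReal)

/-!
Let `z` be a point of the closed ball where `u` has limit `a`, and compare the means of `‖u - a‖`
over the homothetic copies `Bₖ` of `ball x R` with centre of homothety `z` and ratio `2⁻ᵏ`. Since
`Bₖ₊₁ ⊆ Bₖ`, and points of `Bₖ` are at distance at most `2 · 2⁻ᵏ R`, Jensen's inequality bounds the
mean of `‖u y - u y'‖` over `Bₖ × Bₖ₊₁` by a multiple of `(2⁻ᵏ R) ^ (α - d / q) [u]`. As `α q > d`,
these bounds form a convergent geometric series, and the means over `Bₖ` tend to `0`, so the mean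
over `B₀ = ball x R` is at most a multiple of `R ^ (α - d / q) [u]`. A continuous function vanishing
on the sphere has limit `0` at any point `z` of it.
-/

section Averages

variable {X Y F ι : Type*} [MeasurableSpace X] [MeasurableSpace Y] [NormedAddCommGroup F]
  {μ : Measure X} {ν : Measure Y}

lemma setLAverage_le_of_forall_mem {f : X → ℝ≥0∞} {C : ℝ≥0∞} {S : Set X} (hS : MeasurableSet S)
    (hf : ∀ x ∈ S, f x ≤ C) : ⨍⁻ x in S, f x ∂μ ≤ C :=
  (laverage_le_essSup f).trans (essSup_le_of_ae_le _ (ae_restrict_of_forall_mem hS hf))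

lemma tendsto_setLAverage_zero {f : X → ℝ≥0∞} {L : Filter X} {l : Filter ι} {S : ι → Set X}
    (hf : Tendsto f L (𝓝 0)) (hS : Tendsto S l L.smallSets) (hSm : ∀ i, MeasurableSet (S i)) :
    Tendsto (fun i ↦ ⨍⁻ x in S i, f x ∂μ) l (𝓝 0) := by
  refine ENNReal.tendsto_nhds_zero.2 fun ε hε ↦ ?_
  have hfε : {x | f x ≤ ε} ∈ L := ENNReal.tendsto_nhds_zero.1 hf ε hε
  filter_upwards [tendsto_smallSets_iff.1 hS _ hfε] with i hi
  exact setLAverage_le_of_forall_mem (hSm i) hi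

lemma setLAverage_enorm_le_add {S : Set X} {T : Set Y} (hS₀ : μ S ≠ 0) (hS : μ S ≠ ∞)
    (hT₀ : ν T ≠ 0) (hT : ν T ≠ ∞) (f : X → F) {g : Y → F}
    (hg : AEStronglyMeasurable g (ν.restrict T)) :
    ⨍⁻ x in S, ‖f x‖ₑ ∂μ ≤
      ⨍⁻ y in T, ‖g y‖ₑ ∂ν + ⨍⁻ x in S, ⨍⁻ y in T, ‖f x - g y‖ₑ ∂ν ∂μ := by
  have hpoint (x : X) : ‖f x‖ₑ ≤ ⨍⁻ y in T, ‖g y‖ₑ ∂ν + ⨍⁻ y in T, ‖f x - g y‖ₑ ∂ν :=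
    calc ‖f x‖ₑ = ⨍⁻ _ in T, ‖f x‖ₑ ∂ν := (setLAverage_const hT₀ hT _).symm
      _ ≤ ⨍⁻ y in T, (‖g y‖ₑ + ‖f x - g y‖ₑ) ∂ν := lintegral_mono fun y ↦ by
          simpa only [add_sub_cancel] using enorm_add_le (g y) (f x - g y)
      _ = ⨍⁻ y in T, ‖g y‖ₑ ∂ν + ⨍⁻ y in T, ‖f x - g y‖ₑ ∂ν :=
          lintegral_add_left' (hg.enorm.smul_measure _) _
  calc ⨍⁻ x in S, ‖f x‖ₑ ∂μ
      ≤ ⨍⁻ x in S, (⨍⁻ y in T, ‖g y‖ₑ ∂ν + ⨍⁻ y in T, ‖f x - g y‖ₑ ∂ν) ∂μ :=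
        lintegral_mono hpoint
    _ = ⨍⁻ _ in S, ⨍⁻ y in T, ‖g y‖ₑ ∂ν ∂μ + ⨍⁻ x in S, ⨍⁻ y in T, ‖f x - g y‖ₑ ∂ν ∂μ :=
        lintegral_add_left measurable_const _
    _ = ⨍⁻ y in T, ‖g y‖ₑ ∂ν + ⨍⁻ x in S, ⨍⁻ y in T, ‖f x - g y‖ₑ ∂ν ∂μ := by
        rw [setLAverage_const hS₀ hS]

lemma lintegral_lintegral_le_rpow [IsProbabilityMeasure μ] [IsProbabilityMeasure ν] {p : ℝ}
    (hp : 1 ≤ p) {k : X → Y → ℝ≥0∞} (hk : AEMeasurable (Function.uncurry k) (μ.prod ν)) :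
    ∫⁻ x, ∫⁻ y, k x y ∂ν ∂μ ≤ (∫⁻ x, ∫⁻ y, k x y ^ p ∂ν ∂μ) ^ (1 / p) := by
  have hnorm := eLpNorm'_le_eLpNorm'_of_exponent_le one_pos hp (μ.prod ν) hk.aestronglyMeasurable
  simp only [eLpNorm', enorm_eq_self, ENNReal.rpow_one, div_one] at hnorm
  rwa [lintegral_prod _ hk, lintegral_prod _ (hk.pow_const p)] at hnorm

lemma setLAverage_setLAverage_le_rpow {S : Set X} {T : Set Y} (hS₀ : μ S ≠ 0) (hS : μ S ≠ ∞)
    (hT₀ : ν T ≠ 0) (hT : ν T ≠ ∞) {p : ℝ} (hp : 1 ≤ p) {k : X → Y → ℝ≥0∞}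
    (hk : AEMeasurable (Function.uncurry k) ((μ.restrict S).prod (ν.restrict T))) :
    ⨍⁻ x in S, ⨍⁻ y in T, k x y ∂ν ∂μ ≤
      ((μ S * ν T)⁻¹ * ∫⁻ x in S, ∫⁻ y in T, k x y ^ p ∂ν ∂μ) ^ (1 / p) := by
  have : NeZero (μ.restrict S) := ⟨by simpa [Measure.restrict_eq_zero]⟩
  have : NeZero (ν.restrict T) := ⟨by simpa [Measure.restrict_eq_zero]⟩
  have : IsFiniteMeasure (μ.restrict S) := ⟨by simpa using hS.lt_top⟩
  have : IsFiniteMeasure (ν.restrict T) := ⟨by simpa using hT.lt_top⟩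
  have hk' : AEMeasurable (Function.uncurry k)
      (((μ.restrict S univ)⁻¹ • μ.restrict S).prod ((ν.restrict T univ)⁻¹ • ν.restrict T)) :=
    hk.mono_ac (Measure.smul_absolutelyContinuous.prod Measure.smul_absolutelyContinuous)
  refine (lintegral_lintegral_le_rpow hp hk').trans_eq ?_
  simp only [lintegral_smul_measure, Measure.restrict_apply_univ, smul_eq_mul]
  rw [lintegral_const_mul' _ _ (ENNReal.inv_ne_top.2 hT₀), ← mul_assoc,
    ENNReal.mul_inv (.inl hS₀) (.inl hS)]

end Averages

section Seminorm

variable {X F : Type*} [PseudoEMetricSpace X] [NormedAddCommGroup F]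
  {d α p : ℝ} {q D : ℝ≥0∞} {A S T : Set X} {u : X → F}

/-- The `W^{α,q}` seminorm of `eFracSeminorm`, for maps from a metric measure space to a normed
group. -/
def eSlobodeckij [MeasurableSpace X] (d α : ℝ) (q : ℝ≥0∞) (μ : Measure X) (A : Set X)
    (u : X → F) : ℝ≥0∞ :=
  if q = ∞ then eHolder α A u
  else (fracPow d α q.toReal (μ.restrict A) u) ^ (1 / q.toReal)

lemma eFracSeminorm_eq_eSlobodeckij {n : ℕ} (d α : ℝ) (q : ℝ≥0∞) (A : Set (Euc n)) (u : Euc n → ℝ) :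
    eFracSeminorm d α q A u = eSlobodeckij d α q volume A u := rfl

lemma le_rpow_mul_div_rpow {a b D : ℝ≥0∞} {s : ℝ} (hs : 0 ≤ s) (hb : b ≤ D) (hD₀ : D ≠ 0)
    (hD : D ≠ ∞) : a ≤ D ^ s * (a / b ^ s) := by
  have hDs₀ : D ^ s ≠ 0 := (ENNReal.rpow_pos (pos_iff_ne_zero.2 hD₀) hD).ne'
  calc a = D ^ s * (a / D ^ s) :=
        (ENNReal.mul_div_cancel hDs₀ (ENNReal.rpow_ne_top_of_nonneg hs hD)).symm
    _ ≤ D ^ s * (a / b ^ s) := by gcongr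

lemma enorm_sub_le_rpow_mul_eHolder (hα : 0 ≤ α) (hD₀ : D ≠ 0) (hD : D ≠ ∞) {x y : X} (hx : x ∈ A)
    (hy : y ∈ A) (hxy : edist x y ≤ D) : ‖u x - u y‖ₑ ≤ D ^ α * eHolder α A u :=
  calc ‖u x - u y‖ₑ ≤ D ^ α * (‖u x - u y‖ₑ / edist x y ^ α) :=
        le_rpow_mul_div_rpow hα hxy hD₀ hD
    _ ≤ D ^ α * eHolder α A u := by
        rw [← edist_eq_enorm_sub]
        gcongr
        exact le_iSup₂_of_le x hx (le_iSup₂_of_le y hy le_rfl)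

variable [MeasurableSpace X] {μ : Measure X}

lemma setLIntegral_enorm_sub_rpow_le_fracPow (hp : 0 ≤ p) (hdαp : 0 ≤ α * p + d) (hD₀ : D ≠ 0)
    (hD : D ≠ ∞) (hS : MeasurableSet S) (hT : MeasurableSet T) (hSA : S ⊆ A) (hTA : T ⊆ A)
    (hST : ∀ x ∈ S, ∀ y ∈ T, edist x y ≤ D) :
    ∫⁻ x in S, ∫⁻ y in T, ‖u x - u y‖ₑ ^ p ∂μ ∂μ ≤
      D ^ (α * p + d) * fracPow d α p (μ.restrict A) u := by
  have hDs : D ^ (α * p + d) ≠ ∞ := ENNReal.rpow_ne_top_of_nonneg hdαp hD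
  simp only [fracPow, ← ENNReal.ofReal_rpow_of_nonneg (norm_nonneg _) hp, ofReal_norm]
  calc ∫⁻ x in S, ∫⁻ y in T, ‖u x - u y‖ₑ ^ p ∂μ ∂μ
      ≤ ∫⁻ x in S, ∫⁻ y in T,
          D ^ (α * p + d) * (‖u x - u y‖ₑ ^ p / edist x y ^ (α * p + d)) ∂μ ∂μ :=
        setLIntegral_mono' hS fun x hx ↦ setLIntegral_mono' hT fun y hy ↦
          le_rpow_mul_div_rpow hdαp (hST x hx y hy) hD₀ hD
    _ = D ^ (α * p + d) *
          ∫⁻ x in S, ∫⁻ y in T, ‖u x - u y‖ₑ ^ p / edist x y ^ (α * p + d) ∂μ ∂μ := by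
        simp only [lintegral_const_mul' _ _ hDs]
    _ ≤ D ^ (α * p + d) *
          ∫⁻ x in A, ∫⁻ y in A, ‖u x - u y‖ₑ ^ p / edist x y ^ (α * p + d) ∂μ ∂μ := by
        gcongr

lemma setLAverage_enorm_sub_le_fracPow (hα : 0 ≤ α) (hd : 0 ≤ d) (hp : 1 ≤ p)
    (hD₀ : D ≠ 0) (hD : D ≠ ∞) (hS : MeasurableSet S) (hT : MeasurableSet T) (hSA : S ⊆ A)
    (hTA : T ⊆ A) (hST : ∀ x ∈ S, ∀ y ∈ T, edist x y ≤ D) (hμS₀ : μ S ≠ 0) (hμS : μ S ≠ ∞)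
    (hμT₀ : μ T ≠ 0) (hμT : μ T ≠ ∞) (hu : AEStronglyMeasurable u (μ.restrict A)) :
    ⨍⁻ x in S, ⨍⁻ y in T, ‖u x - u y‖ₑ ∂μ ∂μ ≤
      D ^ (α + d * p⁻¹) * (μ S * μ T) ^ (-p⁻¹) * fracPow d α p (μ.restrict A) u ^ (1 / p) := by
  have hp₀ : 0 < p := by linarith
  have : IsFiniteMeasure (μ.restrict S) := ⟨by simpa using hμS.lt_top⟩
  have : IsFiniteMeasure (μ.restrict T) := ⟨by simpa using hμT.lt_top⟩
  have hk : AEMeasurable (Function.uncurry fun x y ↦ ‖u x - u y‖ₑ)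
      ((μ.restrict S).prod (μ.restrict T)) :=
    ((hu.mono_set hSA).comp_fst.sub (hu.mono_set hTA).comp_snd).enorm
  have hμST : (μ S * μ T)⁻¹ ^ (1 / p) = (μ S * μ T) ^ (-p⁻¹) := by
    rw [ENNReal.inv_rpow, ← ENNReal.rpow_neg, one_div]
  have hexp : (α * p + d) * (1 / p) = α + d * p⁻¹ := by field_simp
  calc ⨍⁻ x in S, ⨍⁻ y in T, ‖u x - u y‖ₑ ∂μ ∂μ
      ≤ ((μ S * μ T)⁻¹ * ∫⁻ x in S, ∫⁻ y in T, ‖u x - u y‖ₑ ^ p ∂μ ∂μ) ^ (1 / p) :=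
        setLAverage_setLAverage_le_rpow hμS₀ hμS hμT₀ hμT hp hk
    _ ≤ ((μ S * μ T)⁻¹ * (D ^ (α * p + d) * fracPow d α p (μ.restrict A) u)) ^ (1 / p) := by
        gcongr
        exact setLIntegral_enorm_sub_rpow_le_fracPow hp₀.le (by positivity) hD₀ hD hS hT hSA hTA hST
    _ = D ^ (α + d * p⁻¹) * (μ S * μ T) ^ (-p⁻¹) *
          fracPow d α p (μ.restrict A) u ^ (1 / p) := by
        rw [ENNReal.mul_rpow_of_nonneg _ _ (by positivity),
          ENNReal.mul_rpow_of_nonneg _ _ (by positivity), hμST, ← ENNReal.rpow_mul, hexp]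
        ring

theorem setLAverage_enorm_sub_le_eSlobodeckij (hα : 0 ≤ α) (hd : 0 ≤ d) (hq : 1 ≤ q)
    (hD₀ : D ≠ 0) (hD : D ≠ ∞) (hS : MeasurableSet S) (hT : MeasurableSet T) (hSA : S ⊆ A)
    (hTA : T ⊆ A) (hST : ∀ x ∈ S, ∀ y ∈ T, edist x y ≤ D) (hμS₀ : μ S ≠ 0) (hμS : μ S ≠ ∞)
    (hμT₀ : μ T ≠ 0) (hμT : μ T ≠ ∞) (hu : AEStronglyMeasurable u (μ.restrict A)) :
    ⨍⁻ x in S, ⨍⁻ y in T, ‖u x - u y‖ₑ ∂μ ∂μ ≤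
      D ^ (α + d * q⁻¹.toReal) * (μ S * μ T) ^ (-q⁻¹.toReal) * eSlobodeckij d α q μ A u := by
  rcases eq_or_ne q ∞ with rfl | hq_top
  · simp only [ENNReal.inv_top, ENNReal.toReal_zero, mul_zero, add_zero, neg_zero,
      ENNReal.rpow_zero, mul_one, eSlobodeckij, if_true]
    exact setLAverage_le_of_forall_mem hS fun x hx ↦ setLAverage_le_of_forall_mem hT fun y hy ↦
      enorm_sub_le_rpow_mul_eHolder hα hD₀ hD (hSA hx) (hTA hy) (hST x hx y hy)
  · have hp : 1 ≤ q.toReal := by simpa using ENNReal.toReal_mono hq_top hq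
    rw [eSlobodeckij, if_neg hq_top, ENNReal.toReal_inv]
    exact setLAverage_enorm_sub_le_fracPow hα hd hp hD₀ hD hS hT hSA hTA hST hμS₀ hμS hμT₀ hμT hu

end Seminorm

lemma le_add_tsum_of_tendsto_of_le_succ_add {a b : ℕ → ℝ≥0∞} {l : ℝ≥0∞}
    (hab : ∀ k, a k ≤ a (k + 1) + b k) (ha : Tendsto a atTop (𝓝 l)) : a 0 ≤ l + ∑' k, b k := by
  have hpartial (k : ℕ) : a 0 ≤ a k + ∑' j, b j := by
    suffices h : a 0 ≤ a k + ∑ j ∈ Finset.range k, b j from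
      h.trans (by gcongr; exact ENNReal.sum_le_tsum _)
    induction k with
    | zero => simp
    | succ k ih =>
      calc a 0 ≤ a k + ∑ j ∈ Finset.range k, b j := ih
        _ ≤ a (k + 1) + b k + ∑ j ∈ Finset.range k, b j := by gcongr; exact hab k
        _ = a (k + 1) + ∑ j ∈ Finset.range (k + 1), b j := by rw [Finset.sum_range_succ]; ring
  exact ge_of_tendsto' (ha.add_const _) hpartial

lemma measureReal_ball_pos {X : Type*} [PseudoMetricSpace X] [ProperSpace X] [MeasurableSpace X]
    (μ : Measure X) [IsFiniteMeasureOnCompacts μ] [μ.IsOpenPosMeasure] (x : X) {r : ℝ}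
    (hr : 0 < r) : 0 < μ.real (ball x r) :=
  ENNReal.toReal_pos (measure_ball_pos μ x hr).ne' measure_ball_lt_top.ne

section HomothetyBall

variable {E : Type*} [NormedAddCommGroup E] [NormedSpace ℝ E] {x z : E} {R s t : ℝ}

/-- The image of `ball x R` under the homothety with centre `z` and ratio `t > 0`. -/
def homothetyBall (z x : E) (R t : ℝ) : Set E := ball (AffineMap.lineMap z x t) (t * R)

lemma homothetyBall_one : homothetyBall z x R 1 = ball x R := by
  simp [homothetyBall]

lemma measurableSet_homothetyBall [MeasurableSpace E] [OpensMeasurableSpace E] :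
    MeasurableSet (homothetyBall z x R t) := measurableSet_ball

lemma homothetyBall_subset_homothetyBall (hz : z ∈ closedBall x R) (hst : s ≤ t) :
    homothetyBall z x R s ⊆ homothetyBall z x R t := by
  refine ball_subset_ball' ?_
  have hcentres : dist (AffineMap.lineMap z x s) (AffineMap.lineMap z x t) ≤ (t - s) * R := by
    rw [dist_lineMap_lineMap, dist_comm s, Real.dist_eq, abs_of_nonneg (sub_nonneg.2 hst)]
    exact mul_le_mul_of_nonneg_left hz (sub_nonneg.2 hst)
  linarith

lemma homothetyBall_subset_ball (hz : z ∈ closedBall x R) (ht : 0 ≤ t) :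
    homothetyBall z x R t ⊆ ball z (2 * (t * R)) := by
  refine ball_subset_ball' ?_
  have hcentre : dist (AffineMap.lineMap z x t) z ≤ t * R := by
    rw [dist_lineMap_left, Real.norm_of_nonneg ht]
    exact mul_le_mul_of_nonneg_left hz ht
  linarith

lemma edist_le_of_mem_homothetyBall {y y' : E} (hy : y ∈ homothetyBall z x R t)
    (hy' : y' ∈ homothetyBall z x R t) : edist y y' ≤ ENNReal.ofReal (2 * (t * R)) := by
  rw [edist_dist]
  refine ENNReal.ofReal_le_ofReal ?_
  have := dist_triangle_right y y' (AffineMap.lineMap z x t)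
  rw [homothetyBall, mem_ball] at hy hy'
  linarith

lemma tendsto_homothetyBall_smallSets (hz : z ∈ closedBall x R) {t : ℕ → ℝ}
    (ht₀ : ∀ k, 0 ≤ t k) (ht₁ : ∀ k, t k ≤ 1) (ht : Tendsto t atTop (𝓝 0)) :
    Tendsto (fun k ↦ homothetyBall z x R (t k)) atTop (𝓝[ball x R] z).smallSets := by
  rw [nhdsWithin, smallSets_inf, tendsto_inf, tendsto_smallSets_iff, smallSets_principal,
    tendsto_principal]
  refine ⟨fun U hU ↦ ?_, .of_forall fun k ↦ ?_⟩
  · obtain ⟨ε, hε, hεU⟩ := Metric.mem_nhds_iff.1 hU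
    have hradius : Tendsto (fun k ↦ 2 * (t k * R)) atTop (𝓝 0) := by
      simpa using (ht.mul_const R).const_mul 2
    filter_upwards [hradius.eventually_lt_const hε] with k hk
    exact (homothetyBall_subset_ball hz (ht₀ k)).trans ((ball_subset_ball hk.le).trans hεU)
  · rw [mem_powerset_iff, ← homothetyBall_one (z := z)]
    exact homothetyBall_subset_homothetyBall hz (ht₁ k)

lemma measure_homothetyBall_ne_zero [MeasurableSpace E] (μ : Measure E) [μ.IsOpenPosMeasure]
    (hR : 0 < R) (ht : 0 < t) : μ (homothetyBall z x R t) ≠ 0 :=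
  (measure_ball_pos μ _ (mul_pos ht hR)).ne'

lemma addHaar_homothetyBall [FiniteDimensional ℝ E] [MeasurableSpace E] [BorelSpace E]
    (μ : Measure E) [μ.IsAddHaarMeasure] (hR : 0 < R) (ht : 0 < t) :
    μ (homothetyBall z x R t) =
      ENNReal.ofReal ((t * R) ^ finrank ℝ E * μ.real (ball (0 : E) 1)) := by
  rw [homothetyBall, Measure.addHaar_ball_of_pos μ _ (mul_pos ht hR),
    ENNReal.ofReal_mul (by positivity), ofReal_measureReal]

end HomothetyBall

section Constants

variable {d : ℕ} {ω α θ r R : ℝ}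

/-- The constant of the oscillation estimate between `homothetyBall z x R t` and its half in
dimension `d`: these balls have measures with product `(t * R) ^ (2 * d) * (ω ^ 2 / 2 ^ d)`, where
`ω` is the measure of the unit ball. The parameter `θ` stands for `1 / q`. -/
def halvingConst (d : ℕ) (ω α θ : ℝ) : ℝ :=
  2 ^ (α + d * θ) * (ω ^ 2 / 2 ^ d) ^ (-θ)

lemma halvingConst_pos (d : ℕ) (hω : 0 < ω) (α θ : ℝ) : 0 < halvingConst d ω α θ := by
  unfold halvingConst
  positivity

lemma halvingConst_mul_rpow (hr : 0 < r) :
    halvingConst d ω α θ * r ^ (α - d * θ) =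
      (2 * r) ^ (α + d * θ) * (r ^ d * ω * ((r / 2) ^ d * ω)) ^ (-θ) := by
  have hvolumes : r ^ d * ω * ((r / 2) ^ d * ω) = ω ^ 2 / 2 ^ d * r ^ (2 * d : ℝ) := by
    rw [two_mul, Real.rpow_add hr, Real.rpow_natCast, div_pow]
    ring
  have hdiam : (2 * r) ^ (α + d * θ) = 2 ^ (α + d * θ) * r ^ (α + d * θ) :=
    Real.mul_rpow zero_le_two hr.le
  have hexp : r ^ (α - d * θ) = r ^ (α + d * θ) * r ^ (2 * d * -θ) := by
    rw [← Real.rpow_add hr]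
    ring_nf
  rw [hvolumes, hdiam, Real.mul_rpow (by positivity) (by positivity),
    ← Real.rpow_mul hr.le, hexp, halvingConst]
  ring

/-- Constant in the estimate of the mean of `‖u - u z‖` by `R ^ (α - d / q)` times the seminorm: the
sum of the geometric series of the halving estimates at the scales `2⁻ᵏ`; `θ` stands for `1 / q`. -/
def morreyConst (d : ℕ) (ω α θ : ℝ) : ℝ :=
  halvingConst d ω α θ * (1 - (1 / 2) ^ (α - d * θ))⁻¹

lemma one_half_rpow_lt_one {β : ℝ} (hβ : 0 < β) : (1 / 2 : ℝ) ^ β < 1 :=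
  Real.rpow_lt_one (by norm_num) (by norm_num) hβ

lemma morreyConst_pos (hω : 0 < ω) (hθ : 0 < α - d * θ) : 0 < morreyConst d ω α θ :=
  mul_pos (halvingConst_pos d hω α θ) (inv_pos.2 (sub_pos.2 (one_half_rpow_lt_one hθ)))

lemma tsum_halvingConst_mul_rpow (hω : 0 < ω) (hθ : 0 < α - d * θ) (hR : 0 < R) :
    ∑' k : ℕ, ENNReal.ofReal (halvingConst d ω α θ * ((1 / 2) ^ k * R) ^ (α - d * θ)) =
      ENNReal.ofReal (morreyConst d ω α θ * R ^ (α - d * θ)) := by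
  set β := α - d * θ with hβ
  have hterm (k : ℕ) : halvingConst d ω α θ * ((1 / 2) ^ k * R) ^ β =
      halvingConst d ω α θ * R ^ β * ((1 / 2) ^ β) ^ k := by
    rw [Real.mul_rpow (by positivity) hR.le, Real.rpow_pow_comm (by norm_num)]
    ring
  have hsum : HasSum (fun k : ℕ ↦ halvingConst d ω α θ * ((1 / 2) ^ k * R) ^ β)
      (morreyConst d ω α θ * R ^ β) := by
    simp only [hterm, morreyConst, ← hβ, mul_right_comm _ _ (R ^ β)]
    exact (hasSum_geometric_of_lt_one (by positivity) (one_half_rpow_lt_one hθ)).mul_left _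
  have hnonneg (k : ℕ) : 0 ≤ halvingConst d ω α θ * ((1 / 2) ^ k * R) ^ β :=
    mul_nonneg (halvingConst_pos d hω α θ).le (by positivity)
  rw [← hsum.tsum_eq, ENNReal.ofReal_tsum_of_nonneg hnonneg hsum.summable]

lemma sub_mul_toReal_inv_pos {q : ℝ≥0∞} (h : (d : ℝ≥0∞) < ENNReal.ofReal α * q) :
    0 < α - d * q⁻¹.toReal := by
  have hdiv : (d : ℝ≥0∞) * q⁻¹ < ENNReal.ofReal α := ENNReal.div_lt_of_lt_mul h
  simpa using ENNReal.toReal_lt_of_lt_ofReal hdiv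

end Constants

section Morrey

variable {E F : Type*} [NormedAddCommGroup E] [NormedSpace ℝ E] [FiniteDimensional ℝ E]
  [MeasurableSpace E] [BorelSpace E] [NormedAddCommGroup F] (μ : Measure E) [μ.IsAddHaarMeasure]
  {α : ℝ} {q : ℝ≥0∞} {u : E → F} {x z : E} {R t : ℝ}

local notation "d" => finrank ℝ E
local notation "ω" => Measure.real μ (ball (0 : E) 1)

lemma setLAverage_homothetyBall_enorm_sub_le (hα : 0 ≤ α) (hq : 1 ≤ q) (hR : 0 < R)
    (hz : z ∈ closedBall x R) (hu : AEStronglyMeasurable u (μ.restrict (ball x R))) (ht₀ : 0 < t)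
    (ht₁ : t ≤ 1) :
    ⨍⁻ y in homothetyBall z x R t, ⨍⁻ y' in homothetyBall z x R (t / 2), ‖u y - u y'‖ₑ ∂μ ∂μ ≤
      ENNReal.ofReal (halvingConst d ω α q⁻¹.toReal * (t * R) ^ (α - d * q⁻¹.toReal)) *
        eSlobodeckij d α q μ (ball x R) u := by
  have hω : 0 < ω := measureReal_ball_pos μ 0 one_pos
  have htR : 0 < t * R := mul_pos ht₀ hR
  have hhalf : homothetyBall z x R (t / 2) ⊆ homothetyBall z x R t :=
    homothetyBall_subset_homothetyBall hz (by linarith)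
  have hball : homothetyBall z x R t ⊆ ball x R :=
    (homothetyBall_subset_homothetyBall hz ht₁).trans_eq homothetyBall_one
  refine (setLAverage_enorm_sub_le_eSlobodeckij hα (Nat.cast_nonneg d) hq
    (D := ENNReal.ofReal (2 * (t * R))) (by simpa using htR) ENNReal.ofReal_ne_top
    measurableSet_homothetyBall measurableSet_homothetyBall hball (hhalf.trans hball)
    (fun y hy y' hy' ↦ edist_le_of_mem_homothetyBall hy (hhalf hy'))
    (measure_homothetyBall_ne_zero μ hR ht₀) measure_ball_lt_top.ne
    (measure_homothetyBall_ne_zero μ hR (half_pos ht₀)) measure_ball_lt_top.ne hu).trans_eq ?_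
  congr 1
  rw [addHaar_homothetyBall μ hR ht₀, addHaar_homothetyBall μ hR (half_pos ht₀),
    ← ENNReal.ofReal_mul (by positivity), ENNReal.ofReal_rpow_of_pos (by positivity),
    ENNReal.ofReal_rpow_of_pos (by positivity), ← ENNReal.ofReal_mul (by positivity),
    halvingConst_mul_rpow htR, div_mul_eq_mul_div]

lemma setLAverage_homothetyBall_enorm_sub_le_add (hα : 0 ≤ α) (hq : 1 ≤ q) (hR : 0 < R)
    (hz : z ∈ closedBall x R) (hu : AEStronglyMeasurable u (μ.restrict (ball x R))) (ht₀ : 0 < t)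
    (ht₁ : t ≤ 1) (a : F) :
    ⨍⁻ y in homothetyBall z x R t, ‖u y - a‖ₑ ∂μ ≤
      ⨍⁻ y in homothetyBall z x R (t / 2), ‖u y - a‖ₑ ∂μ +
        ENNReal.ofReal (halvingConst d ω α q⁻¹.toReal * (t * R) ^ (α - d * q⁻¹.toReal)) *
          eSlobodeckij d α q μ (ball x R) u := by
  have hsub : homothetyBall z x R (t / 2) ⊆ ball x R :=
    (homothetyBall_subset_homothetyBall hz (by linarith)).trans_eq homothetyBall_one
  have htriangle := setLAverage_enorm_le_add (μ := μ) (ν := μ) (S := homothetyBall z x R t)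
    (measure_homothetyBall_ne_zero μ hR ht₀) measure_ball_lt_top.ne
    (measure_homothetyBall_ne_zero μ hR (half_pos ht₀)) measure_ball_lt_top.ne
    (fun y ↦ u y - a) (g := fun y ↦ u y - a) ((hu.mono_set hsub).sub aestronglyMeasurable_const)
  simp only [sub_sub_sub_cancel_right] at htriangle
  exact htriangle.trans
    (by gcongr; exact setLAverage_homothetyBall_enorm_sub_le μ hα hq hR hz hu ht₀ ht₁)

theorem setLAverage_enorm_sub_le_morreyConst_mul (hq : 1 ≤ q) (hαq : 0 < α - d * q⁻¹.toReal)
    (hR : 0 < R) (hz : z ∈ closedBall x R) (hu : AEStronglyMeasurable u (μ.restrict (ball x R)))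
    {a : F} (ha : Tendsto u (𝓝[ball x R] z) (𝓝 a)) :
    ⨍⁻ y in ball x R, ‖u y - a‖ₑ ∂μ ≤
      ENNReal.ofReal (morreyConst d ω α q⁻¹.toReal * R ^ (α - d * q⁻¹.toReal)) *
        eSlobodeckij d α q μ (ball x R) u := by
  have hα : 0 ≤ α := by
    have : 0 ≤ d * q⁻¹.toReal := by positivity
    linarith
  set B : ℕ → Set E := fun k ↦ homothetyBall z x R ((1 / 2) ^ k) with hB
  have hB₀ : B 0 = ball x R := by simp only [hB, pow_zero, homothetyBall_one]
  have hscale₀ (k : ℕ) : (0 : ℝ) < (1 / 2) ^ k := by positivity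
  have hscale₁ (k : ℕ) : (1 / 2 : ℝ) ^ k ≤ 1 := pow_le_one₀ (by norm_num) (by norm_num)
  have hstep (k : ℕ) : ⨍⁻ y in B k, ‖u y - a‖ₑ ∂μ ≤ ⨍⁻ y in B (k + 1), ‖u y - a‖ₑ ∂μ +
      ENNReal.ofReal (halvingConst d ω α q⁻¹.toReal *
          ((1 / 2) ^ k * R) ^ (α - d * q⁻¹.toReal)) * eSlobodeckij d α q μ (ball x R) u := by
    simpa only [hB, pow_succ, mul_one_div] using
      setLAverage_homothetyBall_enorm_sub_le_add μ hα hq hR hz hu (hscale₀ k) (hscale₁ k) a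
  have hlim : Tendsto (fun k ↦ ⨍⁻ y in B k, ‖u y - a‖ₑ ∂μ) atTop (𝓝 0) := by
    have hua : Tendsto (fun y ↦ ‖u y - a‖ₑ) (𝓝[ball x R] z) (𝓝 0) := by
      simpa using (ha.sub_const a).enorm
    exact tendsto_setLAverage_zero hua
      (tendsto_homothetyBall_smallSets hz (fun k ↦ (hscale₀ k).le) hscale₁
        (tendsto_pow_atTop_nhds_zero_of_lt_one (by norm_num) (by norm_num)))
      fun _ ↦ measurableSet_homothetyBall
  rw [← tsum_halvingConst_mul_rpow (measureReal_ball_pos μ 0 one_pos) hαq hR,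
    ← ENNReal.tsum_mul_right]
  simpa only [hB₀, zero_add] using le_add_tsum_of_tendsto_of_le_succ_add hstep hlim

lemma lintegral_enorm_sub_le_morreyConst_mul (hq : 1 ≤ q) (hαq : 0 < α - d * q⁻¹.toReal)
    (hR : 0 < R) (hz : z ∈ closedBall x R) (hu : AEStronglyMeasurable u (μ.restrict (ball x R)))
    {a : F} (ha : Tendsto u (𝓝[ball x R] z) (𝓝 a)) :
    ∫⁻ y in ball x R, ‖u y - a‖ₑ ∂μ ≤
      ENNReal.ofReal (ω * morreyConst d ω α q⁻¹.toReal * R ^ (d * (1 - q⁻¹.toReal) + α)) *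
        eSlobodeckij d α q μ (ball x R) u := by
  set θ := q⁻¹.toReal
  have hvol : μ (ball x R) = ENNReal.ofReal (R ^ d * ω) := by
    simpa [homothetyBall_one] using addHaar_homothetyBall (x := x) (z := z) μ hR one_pos
  have hexp : R ^ (d * (1 - θ) + α) = R ^ d * R ^ (α - d * θ) := by
    rw [← Real.rpow_natCast, ← Real.rpow_add hR]
    ring_nf
  calc ∫⁻ y in ball x R, ‖u y - a‖ₑ ∂μ = μ (ball x R) * ⨍⁻ y in ball x R, ‖u y - a‖ₑ ∂μ :=
        (measure_mul_setLAverage _ measure_ball_lt_top.ne).symm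
    _ ≤ μ (ball x R) * (ENNReal.ofReal (morreyConst d ω α θ * R ^ (α - d * θ)) *
          eSlobodeckij d α q μ (ball x R) u) := by
        gcongr
        exact setLAverage_enorm_sub_le_morreyConst_mul μ hq hαq hR hz hu ha
    _ = ENNReal.ofReal (ω * morreyConst d ω α θ * R ^ (d * (1 - θ) + α)) *
          eSlobodeckij d α q μ (ball x R) u := by
        rw [hvol, ← mul_assoc, ← ENNReal.ofReal_mul (by positivity), hexp]
        ring_nf

end Morrey

lemma exists_tendsto_zero_of_eq_zero_on_sphere {E F : Type*} [NormedAddCommGroup E]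
    [NormedSpace ℝ E] [Nontrivial E] [TopologicalSpace F] [Zero F] {u : E → F} {x : E} {R : ℝ}
    (hR : 0 ≤ R) (hu : ContinuousOn u (closedBall x R)) (hzero : ∀ z ∈ sphere x R, u z = 0) :
    ∃ z ∈ closedBall x R, Tendsto u (𝓝[ball x R] z) (𝓝 0) := by
  obtain ⟨z, hz⟩ : (sphere x R).Nonempty := NormedSpace.sphere_nonempty.2 hR
  have hzR : z ∈ closedBall x R := sphere_subset_closedBall hz
  exact ⟨z, hzR, hzero z hz ▸ (hu z hzR).mono ball_subset_closedBall⟩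

theorem statement8_general {E F : Type*} [NormedAddCommGroup E] [NormedSpace ℝ E]
    [FiniteDimensional ℝ E] [MeasurableSpace E] [BorelSpace E] [NormedAddCommGroup F]
    (μ : Measure E) [μ.IsAddHaarMeasure] (α : ℝ) (q : ℝ≥0∞) (hq : 1 ≤ q)
    (hαq : (finrank ℝ E : ℝ≥0∞) < ENNReal.ofReal α * q) :
    ∃ c : ℝ, 0 < c ∧ ∀ (x : E) (R : ℝ), 0 < R → ∀ u : E → F,
      AEStronglyMeasurable u (μ.restrict (ball x R)) → ∀ z ∈ closedBall x R, ∀ a : F,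
      Tendsto u (𝓝[ball x R] z) (𝓝 a) →
      ∫⁻ y in ball x R, ‖u y - a‖ₑ ∂μ ≤
        ENNReal.ofReal (c * R ^ ((finrank ℝ E : ℝ) * (1 - q⁻¹.toReal) + α)) *
          eSlobodeckij (finrank ℝ E) α q μ (ball x R) u :=
  have hβ := sub_mul_toReal_inv_pos hαq
  have hω := measureReal_ball_pos μ (0 : E) one_pos
  ⟨μ.real (ball (0 : E) 1) * morreyConst (finrank ℝ E) (μ.real (ball 0 1)) α q⁻¹.toReal,
    mul_pos hω (morreyConst_pos hω hβ),
    fun _ _ hR _ hu _ hz _ ha ↦ lintegral_enorm_sub_le_morreyConst_mul μ hq hβ hR hz hu ha⟩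

/-- fractional Poincaré inequality.
Let `α ∈ (0,1)` and `q ∈ [1,∞]` with `αq > n`. Then there is `c > 0` depending only on
`α, q, n` such that for every `R > 0` and every `u ∈ W^{α,q}(B(0,R))` whose continuous
representative vanishes on `∂B(0,R)`, one has
`‖u‖_{L¹(B(0,R))} ≤ c · R^{n(1−1/q)+α} · [u]_{W^{α,q}(B(0,R))}`. -/
theorem statement8 {n : ℕ} (hn : 1 ≤ n) (α : ℝ) (hα : α ∈ Ioo (0 : ℝ) 1)
    (q : ℝ≥0∞) (hq : 1 ≤ q) (hαq : (n : ℝ≥0∞) < ENNReal.ofReal α * q) :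
    ∃ c : ℝ, 0 < c ∧ ∀ R : ℝ, 0 < R → ∀ u : Euc n → ℝ,
      ContinuousOn u (closedBall 0 R) → (∀ x ∈ sphere (0 : Euc n) R, u x = 0) →
      ∫⁻ x in ball (0 : Euc n) R, ‖u x‖₊ ≤
        ENNReal.ofReal (c * R ^ ((n : ℝ) * (1 - q⁻¹.toReal) + α)) *
          eFracSeminorm (n : ℝ) α q (ball 0 R) u := by
  obtain ⟨c, hc, hbound⟩ := statement8_general (F := ℝ) (volume : Measure (Euc n)) α q hq
    (by simpa using hαq)
  refine ⟨c, hc, fun R hR u hu hzero ↦ ?_⟩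
  have : Nonempty (Fin n) := ⟨⟨0, hn⟩⟩
  obtain ⟨z, hz, hlim⟩ := exists_tendsto_zero_of_eq_zero_on_sphere hR.le hu hzero
  have hmeas : AEStronglyMeasurable u (volume.restrict (ball 0 R)) :=
    (hu.mono ball_subset_closedBall).aestronglyMeasurable measurableSet_ball
  simpa only [sub_zero, finrank_euclideanSpace_fin, enorm_eq_nnnorm, eFracSeminorm_eq_eSlobodeckij]
    using hbound 0 R hR u hmeas z hz 0 hlim
end
end

section
/- Let S ⊆ ℝⁿ be a k-dimensional submanifold of class C^{1,1} and let V be a distribution of k-planes of class C¹ on ℝⁿ which is non-involutive at every point of ℝⁿ. Then ℋ^k(τ(S,V)) = 0. -/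
noncomputable section
open MeasureTheory Set Module Filter Metric
open scoped ENNReal NNReal Topology RealInnerProductSpace

variable {n : ℕ}

/-- A distribution of `k`-planes of class `C¹` on the open set `Ω ⊆ ℝⁿ`:
a map into the Grassmannian `Gr(k,n)` that is locally spanned by `k`
vector fields of class `C¹`. -/
def IsC1PlaneField (k : ℕ) (Ω : Set (Euc n)) (V : Euc n → Submodule ℝ (Euc n)) : Prop :=
  IsOpen Ω ∧ (∀ x ∈ Ω, finrank ℝ (V x) = k) ∧
    ∀ x ∈ Ω, ∃ U : Set (Euc n), IsOpen U ∧ x ∈ U ∧ U ⊆ Ω ∧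
      ∃ X : Fin k → Euc n → Euc n,
        (∀ i, ContDiffOn ℝ 1 (X i) U) ∧
        ∀ y ∈ U, V y = Submodule.span ℝ (Set.range fun i => X i y)

/-- Tangency set of a surface `S` to the plane field `V`:
points of `S` where the tangent space of `S` (the tangent cone, which for a `C¹`
submanifold is exactly the classical tangent plane) coincides with `V(x)`. -/
def tangencySet (S : Set (Euc n)) (V : Euc n → Submodule ℝ (Euc n)) : Set (Euc n) :=
  {x ∈ S | tangentConeAt ℝ S x = (V x : Set (Euc n))}

/-- The graph map of `f : W → Wᗮ`. -/
def graphMap (W : Submodule ℝ (Euc n)) (f : ↥W → ↥Wᗮ) : ↥W → Euc n :=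
  fun z => (z : Euc n) + (f z : Euc n)

/-- Lie bracket of two `C¹` vector fields: `[X,Y](x) = DX_x(Y x) − DY_x(X x)`. -/
def lieBracket (X Y : Euc n → Euc n) (x : Euc n) : Euc n :=
  fderiv ℝ X x (Y x) - fderiv ℝ Y x (X x)

/-- `V` is involutive at `x` (relative to the open set `Ω`): for every pair of `C¹`
vector fields tangent to `V` on `Ω`, the Lie bracket at `x` lies in `V x`. -/
def InvolutiveAt (Ω : Set (Euc n)) (V : Euc n → Submodule ℝ (Euc n)) (x : Euc n) : Prop :=
  ∀ X Y : Euc n → Euc n, ContDiffOn ℝ 1 X Ω → ContDiffOn ℝ 1 Y Ω →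
    (∀ y ∈ Ω, X y ∈ V y) → (∀ y ∈ Ω, Y y ∈ V y) → lieBracket X Y x ∈ V x

/-- `S` is a `k`-dimensional embedded submanifold of `ℝⁿ` of class `C^{1,1}`:
near each of its points it is the graph, over a `k`-plane `W`, of a `C¹` function
`f : W → Wᗮ` whose gradient is Lipschitz. -/
def IsC11Submanifold (k : ℕ) (S : Set (Euc n)) : Prop :=
  S.Nonempty ∧
  ∀ x ∈ S, ∃ (W : Submodule ℝ (Euc n)) (U : Set ↥W) (f : ↥W → ↥Wᗮ) (O : Set (Euc n)),
    finrank ℝ W = k ∧ IsOpen U ∧ ContDiffOn ℝ 1 f U ∧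
    (∃ L : ℝ≥0, LipschitzOnWith L (fun z => fderiv ℝ f z) U) ∧
    IsOpen O ∧ x ∈ O ∧ S ∩ O = (graphMap W f '' U) ∩ O

/-!
Near a point of `S`, parametrize `S` by a graph `g` over a `k`-plane and let `A` be the set of
parameters `z` for which `Dg(z)` has range `V (g z)`. Two fields `X`, `Y` tangent to `V` are
`g`-related on `A` to fields on the parameter space. At a point of `A` where `Dg` is
differentiable and where differentials of maps restricted to `A` are unique, the relation can be
differentiated along `A`; by symmetry of `D²g` the bracket of `X` and `Y` is then the image under
`Dg` of the bracket of the related fields, hence tangent to `V`. Almost every point of `A` is of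
this kind: `Dg` is Lipschitz, so Rademacher's theorem applies, and at a Lebesgue density point of
`A` the tangent cone of `A` is the whole parameter space.
-/

open scoped Pointwise in
lemma tangentConeAt_eq_univ_of_density_one {F : Type*} [NormedAddCommGroup F] [NormedSpace ℝ F]
    [FiniteDimensional ℝ F] [MeasurableSpace F] [BorelSpace F] (μ : Measure F)
    [μ.IsAddHaarMeasure] {s : Set F} {x : F}
    (h : Tendsto (fun r => μ (s ∩ closedBall x r) / μ (closedBall x r)) (𝓝[>] 0) (𝓝 1)) :
    tangentConeAt ℝ s x = univ := by
  refine eq_univ_of_forall fun y => ?_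
  rw [tangentConeAt_eq_biInter_closure]
  refine mem_iInter₂.2 fun U hU => Metric.mem_closure_iff.2 fun ε hε => ?_
  have meets_s : ∀ᶠ r in 𝓝[>] (0 : ℝ), (s ∩ ({x} + r • closedBall y (ε / 2))).Nonempty :=
    Measure.eventually_nonempty_inter_smul_of_density_one μ s x h _ measurableSet_closedBall
      (measure_closedBall_pos μ y (half_pos hε)).ne'
  have subset_U : ∀ᶠ r in 𝓝[>] (0 : ℝ), {(0 : F)} + r • closedBall y (ε / 2) ⊆ U :=
    nhdsWithin_le_nhds (eventually_singleton_add_smul_subset isBounded_closedBall hU)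
  obtain ⟨r, ⟨_, hs, hr⟩, hrU, hr₀⟩ :=
    (meets_s.and (subset_U.and self_mem_nhdsWithin)).exists
  rw [singleton_add] at hr
  rw [singleton_zero, zero_add] at hrU
  obtain ⟨_, ⟨a, ha, rfl⟩, rfl⟩ := hr
  refine ⟨a, mem_smul.2 ⟨r⁻¹, mem_univ _, r • a, ⟨hrU (smul_mem_smul_set ha), hs⟩,
    inv_smul_smul₀ hr₀.ne' a⟩, ?_⟩
  rw [dist_comm]
  exact (mem_closedBall.1 ha).trans_lt (half_lt_self hε)

lemma ae_uniqueDiffWithinAt {F : Type*} [NormedAddCommGroup F] [NormedSpace ℝ F]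
    [FiniteDimensional ℝ F] [MeasurableSpace F] [BorelSpace F] (μ : Measure F)
    [μ.IsAddHaarMeasure] (s : Set F) : ∀ᵐ x ∂μ, x ∈ s → UniqueDiffWithinAt ℝ s x := by
  refine ae_imp_of_ae_restrict ?_
  filter_upwards [Besicovitch.ae_tendsto_measure_inter_div μ s] with x hx
  have cone_eq : tangentConeAt ℝ s x = univ := tangentConeAt_eq_univ_of_density_one μ hx
  refine ⟨?_, mem_closure_of_nonempty_tangentConeAt (cone_eq ▸ univ_nonempty)⟩
  rw [cone_eq, Submodule.span_univ]
  exact dense_univ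

lemma hausdorffMeasure_image_eq_zero_of_locally_lipschitzOn {X Y : Type*}
    [EMetricSpace X] [SecondCountableTopology X] [MeasurableSpace X] [BorelSpace X]
    [EMetricSpace Y] [MeasurableSpace Y] [BorelSpace Y] {g : X → Y} {s : Set X} {d : ℝ}
    (hd : 0 ≤ d) (hg : ∀ x ∈ s, ∃ K : ℝ≥0, ∃ t ∈ 𝓝[s] x, LipschitzOnWith K g t)
    (hs : μH[d] s = 0) : μH[d] (g '' s) = 0 := by
  choose! K t ht hK using hg
  obtain ⟨c, hcs, hc, hst⟩ := TopologicalSpace.countable_cover_nhdsWithin ht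
  have image_piece : ∀ x ∈ c, μH[d] (g '' (s ∩ t x)) = 0 := fun x hx => by
    have hle := ((hK x (hcs hx)).mono inter_subset_right).hausdorffMeasure_image_le
      (s := s ∩ t x) hd
    rwa [measure_mono_null inter_subset_left hs, mul_zero, nonpos_iff_eq_zero] at hle
  refine measure_mono_null ?_ ((measure_biUnion_null_iff hc).2 image_piece)
  rintro _ ⟨y, hy, rfl⟩
  obtain ⟨x, hx, hyx⟩ := mem_iUnion₂.1 (hst hy)
  exact mem_iUnion₂.2 ⟨x, hx, y, ⟨hy, hyx⟩, rfl⟩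

section Related

variable {𝕜 E F : Type*} [NontriviallyNormedField 𝕜]
  [NormedAddCommGroup E] [NormedSpace 𝕜 E] [NormedAddCommGroup F] [NormedSpace 𝕜 F]
  {g : F → E} {A : Set F} {z : F} {X Y : E → E} {ξ η : F → F}

lemma fderiv_apply_fderiv_of_related (hA : UniqueDiffWithinAt 𝕜 A z) (hz : z ∈ A)
    (hg : DifferentiableAt 𝕜 g z) (hg' : DifferentiableAt 𝕜 (fderiv 𝕜 g) z)
    (hX : DifferentiableAt 𝕜 X (g z)) (hξ : DifferentiableAt 𝕜 ξ z)
    (h : ∀ y ∈ A, fderiv 𝕜 g y (ξ y) = X (g y)) (w : F) :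
    fderiv 𝕜 X (g z) (fderiv 𝕜 g z w) =
      fderiv 𝕜 (fderiv 𝕜 g) z w (ξ z) + fderiv 𝕜 g z (fderiv 𝕜 ξ z w) := by
  have deriv_X := (hX.hasFDerivAt.comp z hg.hasFDerivAt).hasFDerivWithinAt (s := A)
  have deriv_ξ := (hg'.hasFDerivAt.clm_apply hξ.hasFDerivAt).hasFDerivWithinAt (s := A)
  have eq_on_A := hA.eq deriv_X (deriv_ξ.congr (fun y hy => (h y hy).symm) (h z hz).symm)
  simpa [add_comm] using DFunLike.congr_fun eq_on_A w

lemma lieBracket_eq_fderiv_lieBracket_of_related (hA : UniqueDiffWithinAt 𝕜 A z) (hz : z ∈ A)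
    (hg : DifferentiableAt 𝕜 g z) (hg' : DifferentiableAt 𝕜 (fderiv 𝕜 g) z)
    (hsymm : IsSymmSndFDerivAt 𝕜 g z)
    (hX : DifferentiableAt 𝕜 X (g z)) (hY : DifferentiableAt 𝕜 Y (g z))
    (hξ : DifferentiableAt 𝕜 ξ z) (hη : DifferentiableAt 𝕜 η z)
    (hXξ : ∀ y ∈ A, fderiv 𝕜 g y (ξ y) = X (g y))
    (hYη : ∀ y ∈ A, fderiv 𝕜 g y (η y) = Y (g y)) :
    VectorField.lieBracket 𝕜 X Y (g z) = fderiv 𝕜 g z (VectorField.lieBracket 𝕜 ξ η z) := by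
  have deriv_Y := fderiv_apply_fderiv_of_related hA hz hg hg' hY hη hYη (ξ z)
  have deriv_X := fderiv_apply_fderiv_of_related hA hz hg hg' hX hξ hXξ (η z)
  rw [hXξ z hz] at deriv_Y
  rw [hYη z hz] at deriv_X
  rw [VectorField.lieBracket, VectorField.lieBracket, deriv_Y, deriv_X, hsymm.eq (ξ z) (η z),
    add_sub_add_left_eq_sub, map_sub]

end Related

section LinearLeftInverse

variable {𝕜 E F : Type*} [NontriviallyNormedField 𝕜]
  [NormedAddCommGroup E] [NormedSpace 𝕜 E] [NormedAddCommGroup F] [NormedSpace 𝕜 F]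
  {P : E →L[𝕜] F} {g : F → E} {U : Set F} {z : F}

lemma apply_fderiv_of_leftInvOn (hP : LeftInvOn P g U) (hU : U ∈ 𝓝 z)
    (hg : DifferentiableAt 𝕜 g z) (w : F) : P (fderiv 𝕜 g z w) = w := by
  have comp_eq_id : P ∘ g =ᶠ[𝓝 z] id := by
    filter_upwards [hU] with y hy using hP hy
  exact DFunLike.congr_fun ((P.hasFDerivAt.comp z hg.hasFDerivAt).unique
    ((hasFDerivAt_id z).congr_of_eventuallyEq comp_eq_id)) w

lemma tangentConeAt_image_of_leftInvOn (hP : LeftInvOn P g U) (hU : U ∈ 𝓝 z)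
    (hg : DifferentiableAt 𝕜 g z) :
    tangentConeAt 𝕜 (g '' U) (g z) = range (fderiv 𝕜 g z) := by
  have left_inv : P (g z) = z := hP (mem_of_mem_nhds hU)
  refine Subset.antisymm (fun v hv => ⟨P v, ?_⟩) ?_
  · have deriv_comp : HasFDerivWithinAt (g ∘ P) (fderiv 𝕜 g z ∘L P) (g '' U) (g z) :=
      (HasFDerivAt.comp (g z) (by rw [left_inv]; exact hg.hasFDerivAt)
        P.hasFDerivAt).hasFDerivWithinAt
    have comp_eq_id : ∀ y ∈ g '' U, id y = (g ∘ P) y := by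
      rintro _ ⟨y, hy, rfl⟩
      rw [id, Function.comp_apply, hP hy]
    have deriv_id := deriv_comp.congr comp_eq_id
      (comp_eq_id _ (mem_image_of_mem g (mem_of_mem_nhds hU)))
    exact deriv_id.unique_on (hasFDerivWithinAt_id _ _) hv
  · rintro _ ⟨w, rfl⟩
    refine (hg.hasFDerivAt.hasFDerivWithinAt (s := U)).mapsTo_tangent_cone ?_
    rw [tangentConeAt_of_mem_nhds hU]
    exact mem_univ w

end LinearLeftInverse

/-- `g` is a `C^{1,1}` section, over the open set `U`, of the linear projection `P`. Graphs over a
linear subspace are of this form, with `P` the orthogonal projection onto the subspace. -/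
structure IsC11Section {E F : Type*} [NormedAddCommGroup E] [NormedSpace ℝ E]
    [NormedAddCommGroup F] [NormedSpace ℝ F] (P : E →L[ℝ] F) (g : F → E) (U : Set F) : Prop where
  isOpen : IsOpen U
  contDiffOn : ContDiffOn ℝ 1 g U
  exists_lipschitzOnWith_fderiv : ∃ L : ℝ≥0, LipschitzOnWith L (fderiv ℝ g) U
  leftInvOn : LeftInvOn P g U

namespace IsC11Section

section Normed

variable {E F : Type*} [NormedAddCommGroup E] [NormedSpace ℝ E]
  [NormedAddCommGroup F] [NormedSpace ℝ F]
  {P : E →L[ℝ] F} {g : F → E} {U : Set F} {z : F}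

lemma contDiffAt (h : IsC11Section P g U) (hz : z ∈ U) : ContDiffAt ℝ 1 g z :=
  h.contDiffOn.contDiffAt (h.isOpen.mem_nhds hz)

lemma differentiableAt (h : IsC11Section P g U) (hz : z ∈ U) : DifferentiableAt ℝ g z :=
  (h.contDiffAt hz).differentiableAt one_ne_zero

lemma apply_fderiv (h : IsC11Section P g U) (hz : z ∈ U) (w : F) : P (fderiv ℝ g z w) = w :=
  apply_fderiv_of_leftInvOn h.leftInvOn (h.isOpen.mem_nhds hz) (h.differentiableAt hz) w

lemma tangentConeAt_eq_range_fderiv (h : IsC11Section P g U) {S O : Set E} (hO : IsOpen O)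
    (hS : S ∩ O = g '' U ∩ O) (hz : z ∈ U) (hzO : g z ∈ O) :
    tangentConeAt ℝ S (g z) = range (fderiv ℝ g z) := by
  rw [← tangentConeAt_inter_nhds (hO.mem_nhds hzO), hS,
    tangentConeAt_inter_nhds (hO.mem_nhds hzO),
    tangentConeAt_image_of_leftInvOn h.leftInvOn (h.isOpen.mem_nhds hz) (h.differentiableAt hz)]

lemma isSymmSndFDerivAt (h : IsC11Section P g U) (hz : z ∈ U)
    (hg' : DifferentiableAt ℝ (fderiv ℝ g) z) : IsSymmSndFDerivAt ℝ g z := by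
  refine second_derivative_symmetric_of_eventually (f := g) ?_ hg'.hasFDerivAt
  filter_upwards [h.isOpen.mem_nhds hz] with y hy using (h.differentiableAt hy).hasFDerivAt

lemma lieBracket_mem_range_fderiv (h : IsC11Section P g U) {A : Set F} (hAU : A ⊆ U)
    (hA : UniqueDiffWithinAt ℝ A z) (hz : z ∈ A) (hg' : DifferentiableAt ℝ (fderiv ℝ g) z)
    {X Y : E → E} (hX : DifferentiableAt ℝ X (g z)) (hY : DifferentiableAt ℝ Y (g z))
    (hXA : ∀ y ∈ A, X (g y) ∈ range (fderiv ℝ g y))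
    (hYA : ∀ y ∈ A, Y (g y) ∈ range (fderiv ℝ g y)) :
    VectorField.lieBracket ℝ X Y (g z) ∈ range (fderiv ℝ g z) := by
  have hg := h.differentiableAt (hAU hz)
  have related : ∀ Z : E → E, (∀ y ∈ A, Z (g y) ∈ range (fderiv ℝ g y)) →
      ∀ y ∈ A, fderiv ℝ g y (P (Z (g y))) = Z (g y) := by
    intro Z hZ y hy
    obtain ⟨w, hw⟩ := hZ y hy
    rw [← hw, h.apply_fderiv (hAU hy)]
  have diff : ∀ Z : E → E, DifferentiableAt ℝ Z (g z) →
      DifferentiableAt ℝ (fun y => P (Z (g y))) z := fun Z hZ =>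
    P.differentiableAt.comp z (hZ.comp z hg)
  exact ⟨_, (lieBracket_eq_fderiv_lieBracket_of_related hA hz hg hg'
    (h.isSymmSndFDerivAt (hAU hz) hg') hX hY (diff X hX) (diff Y hY)
    (related X hXA) (related Y hYA)).symm⟩

lemma ae_differentiableAt_fderiv (h : IsC11Section P g U) [FiniteDimensional ℝ E]
    [FiniteDimensional ℝ F] [MeasurableSpace F] [BorelSpace F] (μ : Measure F)
    [μ.IsAddHaarMeasure] : ∀ᵐ z ∂μ, z ∈ U → DifferentiableAt ℝ (fderiv ℝ g) z := by
  obtain ⟨L, hL⟩ := h.exists_lipschitzOnWith_fderiv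
  filter_upwards [hL.ae_differentiableWithinAt_of_mem (μ := μ)] with z hz hzU
  exact (hz hzU).differentiableAt (h.isOpen.mem_nhds hzU)

end Normed

section Euclidean

variable {F : Type*} [NormedAddCommGroup F] [NormedSpace ℝ F]
  {P : Euc n →L[ℝ] F} {g : F → Euc n} {U A : Set F} {Ω : Set (Euc n)}
  {V : Euc n → Submodule ℝ (Euc n)}

lemma involutiveAt (h : IsC11Section P g U) (hAU : A ⊆ U) (hΩ : IsOpen Ω)
    (hAΩ : MapsTo g A Ω) (hAV : ∀ y ∈ A, range (fderiv ℝ g y) = V (g y)) {z : F}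
    (hA : UniqueDiffWithinAt ℝ A z) (hz : z ∈ A) (hg' : DifferentiableAt ℝ (fderiv ℝ g) z) :
    InvolutiveAt Ω V (g z) := by
  intro X Y hX hY hXV hYV
  have diff : ∀ Z : Euc n → Euc n, ContDiffOn ℝ 1 Z Ω → DifferentiableAt ℝ Z (g z) := fun Z hZ =>
    (hZ.contDiffAt (hΩ.mem_nhds (hAΩ hz))).differentiableAt one_ne_zero
  have tangent : ∀ Z : Euc n → Euc n, (∀ x ∈ Ω, Z x ∈ V x) →
      ∀ y ∈ A, Z (g y) ∈ range (fderiv ℝ g y) := fun Z hZ y hy =>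
    hAV y hy ▸ hZ (g y) (hAΩ hy)
  -- The two sign conventions differ: `lieBracket X Y` is `VectorField.lieBracket ℝ Y X`.
  have bracket_mem : lieBracket X Y (g z) ∈ range (fderiv ℝ g z) :=
    h.lieBracket_mem_range_fderiv hAU hA hz hg' (diff Y hY) (diff X hX) (tangent Y hYV)
      (tangent X hXV)
  rwa [hAV z hz] at bracket_mem

lemma ae_involutiveAt (h : IsC11Section P g U) [FiniteDimensional ℝ F] [MeasurableSpace F]
    [BorelSpace F] (μ : Measure F) [μ.IsAddHaarMeasure] (hAU : A ⊆ U) (hΩ : IsOpen Ω)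
    (hAΩ : MapsTo g A Ω) (hAV : ∀ y ∈ A, range (fderiv ℝ g y) = V (g y)) :
    ∀ᵐ z ∂μ, z ∈ A → InvolutiveAt Ω V (g z) := by
  filter_upwards [ae_uniqueDiffWithinAt μ A, h.ae_differentiableAt_fderiv μ] with z hA hg' hz
  exact h.involutiveAt hAU hΩ hAΩ hAV (hA hz) hz (hg' (hAU hz))

lemma hausdorffMeasure_image_not_involutiveAt_eq_zero (h : IsC11Section P g U)
    [FiniteDimensional ℝ F] (hAU : A ⊆ U) (hΩ : IsOpen Ω) (hAΩ : MapsTo g A Ω)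
    (hAV : ∀ y ∈ A, range (fderiv ℝ g y) = V (g y)) :
    μH[(finrank ℝ F : ℝ)] (g '' {z ∈ A | ¬ InvolutiveAt Ω V (g z)}) = 0 := by
  borelize F
  refine hausdorffMeasure_image_eq_zero_of_locally_lipschitzOn (Nat.cast_nonneg _)
    (fun z hz => ?_) ?_
  · obtain ⟨K, t, ht, hK⟩ := (h.contDiffAt (hAU hz.1)).exists_lipschitzOnWith
    exact ⟨K, t, mem_nhdsWithin_of_mem_nhds ht, hK⟩
  · simpa only [ae_iff, Classical.not_imp] using
      h.ae_involutiveAt (μH[(finrank ℝ F : ℝ)]) hAU hΩ hAΩ hAV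

end Euclidean

end IsC11Section

section Graph

variable {W : Submodule ℝ (Euc n)} {f : ↥W → ↥Wᗮ} {U : Set ↥W}

lemma hasFDerivAt_graphMap {z : ↥W} (hf : DifferentiableAt ℝ f z) :
    HasFDerivAt (graphMap W f) (W.subtypeL + Wᗮ.subtypeL ∘L fderiv ℝ f z) z :=
  W.subtypeL.hasFDerivAt.add (Wᗮ.subtypeL.hasFDerivAt.comp z hf.hasFDerivAt)

lemma orthogonalProjectionOnto_graphMap (z : ↥W) :
    W.orthogonalProjectionOnto (graphMap W f z) = z := by
  rw [graphMap, map_add, Submodule.orthogonalProjectionOnto_mem_subspace_eq_self,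
    Submodule.orthogonalProjectionOnto_apply_of_mem_orthogonal (f z).2, add_zero]

lemma lipschitzOnWith_fderiv_graphMap {L : ℝ≥0} (hf : ∀ z ∈ U, DifferentiableAt ℝ f z)
    (hL : LipschitzOnWith L (fderiv ℝ f) U) : LipschitzOnWith L (fderiv ℝ (graphMap W f)) U := by
  have isometry : Isometry fun T : ↥W →L[ℝ] ↥Wᗮ => Wᗮ.subtypeL ∘L T :=
    AddMonoidHomClass.isometry_of_norm (ContinuousLinearMap.compL ℝ ↥W ↥Wᗮ (Euc n) Wᗮ.subtypeL)
      fun _ => Wᗮ.subtypeₗᵢ.norm_toContinuousLinearMap_comp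
  refine LipschitzOnWith.of_dist_le_mul fun y hy z hz => ?_
  rw [(hasFDerivAt_graphMap (hf y hy)).fderiv, (hasFDerivAt_graphMap (hf z hz)).fderiv,
    dist_add_left, isometry.dist_eq]
  exact hL.dist_le_mul y hy z hz

lemma isC11Section_graphMap (hU : IsOpen U) (hf : ContDiffOn ℝ 1 f U)
    (hL : ∃ L : ℝ≥0, LipschitzOnWith L (fderiv ℝ f) U) :
    IsC11Section W.orthogonalProjectionOnto (graphMap W f) U where
  isOpen := hU
  contDiffOn := W.subtypeL.contDiff.contDiffOn.add (Wᗮ.subtypeL.contDiff.comp_contDiffOn hf)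
  exists_lipschitzOnWith_fderiv := hL.imp fun _ => lipschitzOnWith_fderiv_graphMap
    fun _ hz => (hf.contDiffAt (hU.mem_nhds hz)).differentiableAt one_ne_zero
  leftInvOn z _ := orthogonalProjectionOnto_graphMap z

end Graph

theorem statement19_general {n k : ℕ} {S : Set (Euc n)} (hS : IsC11Submanifold k S)
    {Ω : Set (Euc n)} (hΩ : IsOpen Ω) (V : Euc n → Submodule ℝ (Euc n)) :
    μH[(k : ℝ)] {x ∈ tangencySet S V | x ∈ Ω ∧ ¬ InvolutiveAt Ω V x} = 0 := by
  refine measure_null_of_locally_null _ fun x hx => ?_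
  obtain ⟨W, U, f, O, rfl, hU, hf, hL, hO, hxO, hSO⟩ := hS.2 x hx.1.1
  have hg : IsC11Section W.orthogonalProjectionOnto (graphMap W f) U :=
    isC11Section_graphMap hU hf hL
  let A : Set ↥W := {z ∈ U | graphMap W f z ∈ tangencySet S V ∩ Ω ∩ O}
  have tangent : ∀ z ∈ A, range (fderiv ℝ (graphMap W f) z) = V (graphMap W f z) := fun z hz => by
    rw [← hg.tangentConeAt_eq_range_fderiv hO hSO hz.1 hz.2.2, hz.2.1.1.2]
  refine ⟨_, inter_mem_nhdsWithin _ (hO.mem_nhds hxO), measure_mono_null ?_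
    (hg.hausdorffMeasure_image_not_involutiveAt_eq_zero (sep_subset U _) hΩ
      (fun z hz => hz.2.1.2) tangent)⟩
  rintro y ⟨⟨hyV, hyΩ, hy⟩, hyO⟩
  obtain ⟨z, hz, rfl⟩ := (hSO.subset ⟨hyV.1, hyO⟩).1
  exact ⟨z, ⟨⟨hz, ⟨hyV, hyΩ⟩, hyO⟩, hy⟩, rfl⟩

/-- Let `S ⊆ ℝⁿ` be a `k`-dimensional submanifold of class `C^{1,1}`
and let `V` be a distribution of `k`-planes of class `C¹` on `ℝⁿ` which is
non-involutive at every point. Then `ℋ^k(τ(S,V)) = 0`. -/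
theorem statement19 {n k : ℕ}
    (S : Set (Euc n)) (hS : IsC11Submanifold k S)
    (V : Euc n → Submodule ℝ (Euc n)) (hV : IsC1PlaneField k univ V)
    (hni : ∀ x : Euc n, ¬ InvolutiveAt univ V x) :
    μH[(k : ℝ)] (tangencySet S V) = 0 := by
  have hsub : tangencySet S V ⊆ {x ∈ tangencySet S V | x ∈ univ ∧ ¬ InvolutiveAt univ V x} :=
    fun x hx => ⟨hx, mem_univ x, hni x⟩
  exact measure_mono_null hsub (statement19_general hS isOpen_univ V)
end
end
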